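/- (Corollary: robustness bound comparison between Shapley and LOO.) Let τ_0, …, τ_{n−1} be real numbers that are either all nonnegative or all nonpositive, satisfy the diminishing-influence condition |τ_0| ≥ |τ_1| ≥ … ≥ |τ_{n−1}| with τ_{n−1} ≠ 0, and let δ_0, …, δ_{n−1} be nonnegative real numbers with n^{-1} Σ_{k=0}^{n-1} δ_k ≤ δ_{n−1}. Then (n^{-1} Σ_{k=0}^{n-1} δ_k) / (n^{-1} Σ_{k=0}^{n-1} τ_k)² ≤ δ_{n−1} / τ_{n−1}², i.e., the Chebyshev upper bound on the β-robustness of the Shapley value is no larger than that of LOO. -/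

import Mathlib

section

variable {ι K : Type*} [Field K] [LinearOrder K] [IsStrictOrderedRing K] {s : Finset ι} {w : ι → K}

-- Values of constant sign and modulus at least `c` all lie in one of the half-lines `[c, ∞)` and
-- `(-∞, -c]`, which by convexity then contains their weighted mean.
theorem le_abs_sum_mul_of_forall_le_abs {f : ι → K} {c : K}
    (hw : ∀ k ∈ s, 0 ≤ w k) (hw_sum : ∑ k ∈ s, w k = 1)
    (hsign : (∀ k ∈ s, 0 ≤ f k) ∨ (∀ k ∈ s, f k ≤ 0)) (hc : ∀ k ∈ s, c ≤ |f k|) :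
    c ≤ |∑ k ∈ s, w k * f k| := by
  rcases hsign with hnonneg | hnonpos
  · have hf : ∀ k ∈ s, f k ∈ Set.Ici c := fun k hk =>
      (hc k hk).trans_eq (abs_of_nonneg (hnonneg k hk))
    exact le_abs'.2 (.inr ((convex_Ici c).sum_mem hw hw_sum hf))
  · have hf : ∀ k ∈ s, f k ∈ Set.Iic (-c) := fun k hk =>
      le_neg_of_le_neg ((hc k hk).trans_eq (abs_of_nonpos (hnonpos k hk)))
    exact le_abs'.2 (.inl ((convex_Iic (-c)).sum_mem hw hw_sum hf))

-- `w k` is the probability of drawing a subset of size `k`: uniform weights give the Shapley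
-- value, other choices the remaining semivalues (Banzhaf, Beta Shapley).
theorem shapley_bound_le_loo_bound_general {τ δ : ι → K} {m : ι}
    (hw : ∀ k ∈ s, 0 ≤ w k) (hw_sum : ∑ k ∈ s, w k = 1)
    (hsign : (∀ k ∈ s, 0 ≤ τ k) ∨ (∀ k ∈ s, τ k ≤ 0)) (hmin : ∀ k ∈ s, |τ m| ≤ |τ k|)
    (hτ : τ m ≠ 0) (hδ : 0 ≤ δ m) (hmean : ∑ k ∈ s, w k * δ k ≤ δ m) :
    (∑ k ∈ s, w k * δ k) / (∑ k ∈ s, w k * τ k) ^ 2 ≤ δ m / τ m ^ 2 := by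
  have hsq : τ m ^ 2 ≤ (∑ k ∈ s, w k * τ k) ^ 2 :=
    sq_le_sq.2 (le_abs_sum_mul_of_forall_le_abs hw hw_sum hsign hmin)
  exact div_le_div₀ hδ hmean (sq_pos_of_ne_zero hτ) hsq

end

/-- Corollary: robustness bound comparison between Shapley and LOO. If the expected marginal
contributions `τ_0, …, τ_n` are all nonnegative or all nonpositive, have decreasing absolute
values with `τ_n ≠ 0`, and the nonnegative variances `δ_0, …, δ_n` have average at most `δ_n`,
then the Chebyshev bound for the Shapley value is no larger than that for LOO. -/
theorem shapley_bound_le_loo_bound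
    (n : ℕ) (τ δ : Fin (n + 1) → ℝ)
    (hsign : (∀ k, 0 ≤ τ k) ∨ (∀ k, τ k ≤ 0))
    (hmono : ∀ i j : Fin (n + 1), i ≤ j → |τ j| ≤ |τ i|)
    (hlast : τ (Fin.last n) ≠ 0)
    (hδ : ∀ k, 0 ≤ δ k)
    (havg : ((n + 1 : ℕ) : ℝ)⁻¹ * ∑ k, δ k ≤ δ (Fin.last n)) :
    (((n + 1 : ℕ) : ℝ)⁻¹ * ∑ k, δ k) / (((n + 1 : ℕ) : ℝ)⁻¹ * ∑ k, τ k) ^ 2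
      ≤ δ (Fin.last n) / (τ (Fin.last n)) ^ 2 := by
  simp only [Finset.mul_sum] at havg ⊢
  exact shapley_bound_le_loo_bound_general (fun _ _ => by positivity)
    (by simp [Nat.cast_add_one_ne_zero]) (by simpa using hsign)
    (fun k _ => hmono k _ k.le_last) hlast (hδ _) havg
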